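/- Let F be a right Hilbert B-module, C a B-C*-algebra, and I ⊴ C an ideal. Then I is a B-C*-algebra, K(F ⊗_B I) is an ideal in K(F ⊗_B C), and the quotient K(F ⊗_B C)/K(F ⊗_B I) is isomorphic to K(F ⊗_B (C/I)); moreover (F ⊗_B C)/(F ⊗_B I) ≅ F ⊗_B (C/I) as right C/I-Hilbert modules via f ⊗ c + F⊗_B I ↦ f ⊗ (c + I). -/

import Mathlib

noncomputable section

open Filter Topology

universe u

/-- A bundled right Hilbert C*-module structure over a (possibly non-unital)
C*-algebra `B` on a complete normed complex vector space `X`.  The fields record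
the right `B`-action, the `B`-valued inner product, and their standard axioms,
including positivity of inner products and compatibility of the norm. -/
structure HilbertModule (B : Type u) (X : Type u)
    [NonUnitalCStarAlgebra B] [NormedAddCommGroup X] [NormedSpace ℂ X] [CompleteSpace X] :
    Type u where
  smulR : X → B → X
  inner : X → X → B
  smulR_add : ∀ (x : X) (b c : B), smulR x (b + c) = smulR x b + smulR x c
  add_smulR : ∀ (x y : X) (b : B), smulR (x + y) b = smulR x b + smulR y b
  smulR_mul : ∀ (x : X) (b c : B), smulR x (b * c) = smulR (smulR x b) c
  smulC_smulR : ∀ (c : ℂ) (x : X) (b : B), smulR (c • x) b = c • smulR x b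
  inner_add_left : ∀ x y z : X, inner (x + y) z = inner x z + inner y z
  inner_add_right : ∀ x y z : X, inner x (y + z) = inner x y + inner x z
  inner_smulR_right : ∀ (x y : X) (b : B), inner x (smulR y b) = inner x y * b
  inner_smulC_right : ∀ (c : ℂ) (x y : X), inner x (c • y) = c • inner x y
  star_inner : ∀ x y : X, star (inner x y) = inner y x
  inner_self_pos : ∀ x : X, ∃ b : B, inner x x = star b * b
  norm_inner_self : ∀ x : X, ‖x‖ ^ 2 = ‖inner x x‖

/-- `T : X → Y` and `S : Y → X` are mutually adjoint operators between
right Hilbert `B`-modules. -/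
def HilbertModule.IsAdjointPair {B X Y : Type u} [NonUnitalCStarAlgebra B]
    [NormedAddCommGroup X] [NormedSpace ℂ X] [CompleteSpace X]
    [NormedAddCommGroup Y] [NormedSpace ℂ Y] [CompleteSpace Y]
    (hX : HilbertModule B X) (hY : HilbertModule B Y)
    (T : X → Y) (S : Y → X) : Prop :=
  ∀ (x : X) (y : Y), hY.inner (T x) y = hX.inner x (S y)

/-- Positivity in a C*-algebra, expressed as being of the form `star c * c`. -/
def IsPositiveElem {B : Type u} [NonUnitalCStarAlgebra B] (b : B) : Prop :=
  ∃ c : B, b = star c * c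

/-- Positivity of a matrix over a C*-algebra. -/
def MatrixIsPositive {A : Type u} [NonUnitalCStarAlgebra A] {n : ℕ}
    (M : Matrix (Fin n) (Fin n) A) : Prop :=
  ∃ N : Matrix (Fin n) (Fin n) A, M = N.conjTranspose * N

/-- A sequential (the algebras in question are separable) approximate unit. -/
structure IsApproxUnit {A : Type u} [NonUnitalCStarAlgebra A] (e : ℕ → A) : Prop where
  pos : ∀ n, IsPositiveElem (e n)
  norm_le_one : ∀ n, ‖e n‖ ≤ 1
  tendsto_mul_left : ∀ a : A, Tendsto (fun n => e n * a) atTop (𝓝 a)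
  tendsto_mul_right : ∀ a : A, Tendsto (fun n => a * e n) atTop (𝓝 a)

/-- A completely positive map between C*-algebras: a linear map sending positive
matrices to positive matrices at every matrix level. -/
structure IsCPMap {A B : Type u} [NonUnitalCStarAlgebra A] [NonUnitalCStarAlgebra B]
    (ρ : A → B) : Prop where
  map_add : ∀ a a', ρ (a + a') = ρ a + ρ a'
  map_smul : ∀ (c : ℂ) (a : A), ρ (c • a) = c • ρ a
  map_pos_matrix : ∀ (n : ℕ) (M : Matrix (Fin n) (Fin n) A),
    MatrixIsPositive M → MatrixIsPositive (M.map ρ)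

/-- A map between C*-algebras is strict if some approximate unit of the domain is
sent to a strictly Cauchy net in the multiplier algebra of the codomain. -/
def IsStrictMap {A B : Type u} [NonUnitalCStarAlgebra A] [NonUnitalCStarAlgebra B]
    (ρ : A → B) : Prop :=
  ∃ e : ℕ → A, IsApproxUnit e ∧
    ∀ b : B, CauchySeq (fun n => ρ (e n) * b) ∧ CauchySeq (fun n => b * ρ (e n))

/-- A completely positive map from `A` into the adjointable operators on a
right Hilbert `B`-module `X`. -/
structure IsCPAction {A B X : Type u} [NonUnitalCStarAlgebra A] [NonUnitalCStarAlgebra B]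
    [NormedAddCommGroup X] [NormedSpace ℂ X] [CompleteSpace X]
    (hX : HilbertModule B X) (ρ : A → X → X) : Prop where
  map_add : ∀ a a' x, ρ (a + a') x = ρ a x + ρ a' x
  map_smul : ∀ (c : ℂ) (a : A) x, ρ (c • a) x = c • ρ a x
  add_right : ∀ a x y, ρ a (x + y) = ρ a x + ρ a y
  adjointable : ∀ a, ∃ S, HilbertModule.IsAdjointPair hX hX (ρ a) S
  pos : ∀ (n : ℕ) (M : Matrix (Fin n) (Fin n) A), MatrixIsPositive M →
    ∀ x : Fin n → X, IsPositiveElem (∑ i, ∑ j, hX.inner (x i) (ρ (M i j) (x j)))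

/-- Strictness for a completely positive map into the adjointable operators on a
Hilbert module: some approximate unit is mapped to a strictly Cauchy net. -/
def IsStrictAction {A B X : Type u} [NonUnitalCStarAlgebra A] [NonUnitalCStarAlgebra B]
    [NormedAddCommGroup X] [NormedSpace ℂ X] [CompleteSpace X]
    (hX : HilbertModule B X) (ρ : A → X → X) : Prop :=
  ∃ e : ℕ → A, IsApproxUnit e ∧ ∃ S : ℕ → X → X,
    (∀ n, HilbertModule.IsAdjointPair hX hX (ρ (e n)) (S n)) ∧
    ∀ x, CauchySeq (fun n => ρ (e n) x) ∧ CauchySeq (fun n => S n x)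

/-- A left action of `A` on a Hilbert `B`-module by adjointable operators via a
*-homomorphism, i.e. the structure of an `A`–`B`-correspondence. -/
structure IsCorrespondenceAction {A B X : Type u} [NonUnitalCStarAlgebra A]
    [NonUnitalCStarAlgebra B]
    [NormedAddCommGroup X] [NormedSpace ℂ X] [CompleteSpace X]
    (hX : HilbertModule B X) (φ : A → X → X) : Prop where
  map_add : ∀ a a' x, φ (a + a') x = φ a x + φ a' x
  map_mul : ∀ a a' x, φ (a * a') x = φ a (φ a' x)
  map_smul : ∀ (c : ℂ) (a : A) x, φ (c • a) x = c • φ a x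
  add_right : ∀ a x y, φ a (x + y) = φ a x + φ a y
  star_adjoint : ∀ a, HilbertModule.IsAdjointPair hX hX (φ a) (φ (star a))

/-- The trivial right Hilbert `B`-module structure on `B` itself. -/
def trivHM (B : Type u) [NonUnitalCStarAlgebra B] : HilbertModule B B where
  smulR b c := b * c
  inner b c := star b * c
  smulR_add := by intros; simp [mul_add]
  add_smulR := by intros; simp [add_mul]
  smulR_mul := by intros; simp [mul_assoc]
  smulC_smulR := by intros; simp [smul_mul_assoc]
  inner_add_left := by intros; simp [star_add, add_mul]
  inner_add_right := by intros; simp [mul_add]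
  inner_smulR_right := by intros; simp [mul_assoc]
  inner_smulC_right := by intros; simp [mul_smul_comm]
  star_inner := by intros; simp [star_mul, mul_assoc]
  inner_self_pos := fun b => ⟨b, rfl⟩
  norm_inner_self := by intro b; rw [CStarRing.norm_star_mul_self, pow_two]

/-- `T` is "compact relative to the projection/identification `Q`": it can be
approximated in operator norm by finite sums of rank-one operators
`θ_{u,v} : z ↦ u⟨v, z⟩` with vectors in the image of `Q`.  With `Q = id` this
says `T ∈ K(X)`. -/
def IsCptOn {B X : Type u} [NonUnitalCStarAlgebra B]
    [NormedAddCommGroup X] [NormedSpace ℂ X] [CompleteSpace X]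
    (hX : HilbertModule B X) (Q : X → X) (T : X → X) : Prop :=
  ∀ ε : ℝ, 0 < ε → ∃ (n : ℕ) (u v : Fin n → X), ∀ z : X,
    ‖T (Q z) - ∑ i, hX.smulR (Q (u i)) (hX.inner (Q (v i)) (Q z))‖ ≤ ε * ‖Q z‖

/-- The interior (balanced) tensor product `X ⊗_B Y` of a right Hilbert
`B`-module `X` with a Hilbert `C`-module `Y` carrying a left `B`-action `actY`,
presented via the canonical bilinear map `mk2 : (x, y) ↦ x ⊗ y` with its
characteristic inner product identity and density of elementary tensors. -/
structure TensorData {B C X Y : Type u} [NonUnitalCStarAlgebra B] [NonUnitalCStarAlgebra C]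
    [NormedAddCommGroup X] [NormedSpace ℂ X] [CompleteSpace X]
    [NormedAddCommGroup Y] [NormedSpace ℂ Y] [CompleteSpace Y]
    (hX : HilbertModule B X) (hY : HilbertModule C Y) (actY : B → Y → Y)
    (T : Type u) [NormedAddCommGroup T] [NormedSpace ℂ T] [CompleteSpace T] :
    Type u where
  str : HilbertModule C T
  mk2 : X → Y → T
  mk2_add_left : ∀ x x' y, mk2 (x + x') y = mk2 x y + mk2 x' y
  mk2_add_right : ∀ x y y', mk2 x (y + y') = mk2 x y + mk2 x y'
  mk2_balanced : ∀ x b y, mk2 (hX.smulR x b) y = mk2 x (actY b y)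
  inner_mk2 : ∀ x₁ y₁ x₂ y₂,
    str.inner (mk2 x₁ y₁) (mk2 x₂ y₂) = hY.inner y₁ (actY (hX.inner x₁ x₂) y₂)
  dense : (Submodule.span ℂ (Set.range fun p : X × Y => mk2 p.1 p.2)).topologicalClosure = ⊤

/-- A `B`-C*-algebra structure on `C`: a nondegenerate *-homomorphism
`B → M(C)`, presented as a left action of `B` on `C` by adjointable right
`C`-module maps (i.e. multipliers). -/
structure IsMultiplierAction {B C : Type u} [NonUnitalCStarAlgebra B]
    [NonUnitalCStarAlgebra C] (actB : B → C → C) : Prop where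
  corr : IsCorrespondenceAction (trivHM C) actB
  mul_right : ∀ (b : B) (c c' : C), actB b (c * c') = actB b c * c'
  nondeg : (Submodule.span ℂ
    {x : C | ∃ (b : B) (c : C), x = actB b c}).topologicalClosure = ⊤

/-- Compact operators all of whose approximating rank-one vectors can be taken
in the subset `S` (e.g. `K(F ⊗_B I) ⊆ K(F ⊗_B C)` for `S = F ⊗_B I`). -/
def IsCptVecIn {C M : Type u} [NonUnitalCStarAlgebra C]
    [NormedAddCommGroup M] [NormedSpace ℂ M] [CompleteSpace M]
    (hM : HilbertModule C M) (S : Set M) (T : M → M) : Prop :=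
  ∀ ε : ℝ, 0 < ε → ∃ (n : ℕ) (ξ η : Fin n → M), (∀ i, ξ i ∈ S ∧ η i ∈ S) ∧
    ∀ z : M, ‖T z - ∑ i, hM.smulR (ξ i) (hM.inner (η i) z)‖ ≤ ε * ‖z‖

namespace HilbertModule

variable {B X : Type u} [NonUnitalCStarAlgebra B] [NormedAddCommGroup X] [NormedSpace ℂ X]
  [CompleteSpace X] (hX : HilbertModule B X)

lemma inner_zero_right (x : X) : hX.inner x 0 = 0 := by
  simpa using hX.inner_add_right x 0 0

lemma inner_zero_left (x : X) : hX.inner 0 x = 0 := by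
  simpa using hX.inner_add_left 0 0 x

lemma inner_neg_right (x y : X) : hX.inner x (-y) = -hX.inner x y := by
  simpa using hX.inner_smulC_right (-1) x y

lemma inner_sub_right (x y z : X) : hX.inner x (y - z) = hX.inner x y - hX.inner x z := by
  rw [sub_eq_add_neg, hX.inner_add_right, hX.inner_neg_right, sub_eq_add_neg]

lemma inner_sub_left (x y z : X) : hX.inner (x - y) z = hX.inner x z - hX.inner y z := by
  rw [← hX.star_inner z, hX.inner_sub_right, star_sub, hX.star_inner, hX.star_inner]

lemma inner_smulC_left (c : ℂ) (x y : X) : hX.inner (c • x) y = star c • hX.inner x y := by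
  rw [← hX.star_inner y, hX.inner_smulC_right, star_smul, hX.star_inner]

lemma inner_smulR_left (x y : X) (b : B) :
    hX.inner (hX.smulR x b) y = star b * hX.inner x y := by
  rw [← hX.star_inner y, hX.inner_smulR_right, star_mul, hX.star_inner]

lemma eq_zero_of_inner_self {x : X} (h : hX.inner x x = 0) : x = 0 := by
  have := hX.norm_inner_self x
  rw [h, norm_zero] at this
  exact norm_eq_zero.1 (pow_eq_zero_iff two_ne_zero |>.1 this)

lemma ext_inner {x y : X} (h : ∀ w, hX.inner w x = hX.inner w y) : x = y := by
  rw [← sub_eq_zero]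
  apply hX.eq_zero_of_inner_self
  rw [hX.inner_sub_right, h, sub_self]

lemma smulR_smulC (c : ℂ) (x : X) (b : B) : hX.smulR x (c • b) = c • hX.smulR x b :=
  hX.ext_inner fun w => by
    rw [hX.inner_smulR_right, hX.inner_smulC_right, hX.inner_smulR_right, mul_smul_comm]

lemma smulR_zero (x : X) : hX.smulR x 0 = 0 := by
  simpa using hX.smulR_add x 0 0

lemma zero_smulR (b : B) : hX.smulR 0 b = 0 := by
  simpa using hX.add_smulR 0 0 b

lemma sub_smulR (x y : X) (b : B) : hX.smulR (x - y) b = hX.smulR x b - hX.smulR y b :=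
  hX.ext_inner fun w => by
    simp only [hX.inner_smulR_right, hX.inner_sub_right, sub_mul]

lemma star_inner_self (x : X) : IsSelfAdjoint (hX.inner x x) := hX.star_inner x x

/-- The Cauchy–Schwarz inequality. -/
lemma norm_inner_le (x y : X) : ‖hX.inner x y‖ ≤ ‖x‖ * ‖y‖ := by
  let _ : PartialOrder B := CStarAlgebra.spectralOrder B
  have _ : StarOrderedRing B := CStarAlgebra.spectralOrderedRing B
  rcases eq_or_ne x 0 with rfl | hx
  · simp [hX.inner_zero_left]
  set a := hX.inner x y with ha
  set s : ℝ := ‖x‖ ^ 2 with hs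
  have hs0 : 0 < s := by positivity
  have key : s • (star a * a) ≤ s • (s • hX.inner y y) := by
    obtain ⟨b, hb⟩ := hX.inner_self_pos (hX.smulR x a - (s : ℂ) • y)
    have h0 : 0 ≤ star b * b := star_mul_self_nonneg b
    have hax : hX.inner y x = star a := by rw [ha, hX.star_inner]
    have hxx : star a * hX.inner x x * a ≤ s • (star a * a) := by
      rw [hs, hX.norm_inner_self]
      exact CStarAlgebra.star_left_conjugate_le_norm_smul (hX.star_inner_self x)
    have e : hX.inner (hX.smulR x a - (s : ℂ) • y) (hX.smulR x a - (s : ℂ) • y)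
        = star a * hX.inner x x * a - s • (star a * a) - s • (star a * a)
          + s • (s • hX.inner y y) := by
      simp only [hX.inner_sub_right, hX.inner_sub_left, hX.inner_smulR_right,
        hX.inner_smulR_left, hX.inner_smulC_right, hX.inner_smulC_left, hax, ← ha]
      simp only [smul_mul_assoc, mul_smul_comm, Complex.coe_smul, RCLike.star_def,
        Complex.conj_ofReal, mul_assoc]
      abel
    rw [← hb, e] at h0
    have := add_le_add_left hxx (-(s • (star a * a)) - s • (star a * a) + s • (s • hX.inner y y))
    have h1 := h0.trans (le_trans (le_of_eq (by abel)) this)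
    rw [← sub_nonneg]
    refine h1.trans (le_of_eq (by abel))
  rw [smul_le_smul_iff_of_pos_left hs0] at key
  have h2 := CStarAlgebra.norm_le_norm_of_nonneg_of_le (star_mul_self_nonneg a) key
  rw [CStarRing.norm_star_mul_self, norm_smul, ← hX.norm_inner_self, Real.norm_of_nonneg hs0.le,
    hs, ← mul_pow, ← pow_two] at h2
  exact (pow_le_pow_iff_left₀ (norm_nonneg _) (by positivity) two_ne_zero).1 h2

lemma norm_smulR_le (x : X) (b : B) : ‖hX.smulR x b‖ ≤ ‖x‖ * ‖b‖ := by
  refine (pow_le_pow_iff_left₀ (norm_nonneg _) (by positivity) two_ne_zero).1 ?_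
  rw [hX.norm_inner_self, hX.inner_smulR_right, hX.inner_smulR_left, mul_pow, hX.norm_inner_self]
  refine (norm_mul_le _ _).trans ?_
  calc ‖star b * hX.inner x x‖ * ‖b‖ ≤ ‖star b‖ * ‖hX.inner x x‖ * ‖b‖ := by
        gcongr; exact norm_mul_le _ _
    _ = _ := by rw [norm_star]; ring

/-- The inner product against a fixed vector, as a continuous linear map. -/
def innerL (v : X) : X →L[ℂ] B :=
  LinearMap.mkContinuous
    { toFun := hX.inner v
      map_add' := hX.inner_add_right v
      map_smul' := fun c x => hX.inner_smulC_right c v x } ‖v‖ (hX.norm_inner_le v)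

@[simp] lemma innerL_apply (v x : X) : hX.innerL v x = hX.inner v x := rfl

/-- Right multiplication of a fixed vector, as a continuous linear map. -/
def smulL (x : X) : B →L[ℂ] X :=
  LinearMap.mkContinuous
    { toFun := hX.smulR x
      map_add' := hX.smulR_add x
      map_smul' := fun c b => hX.smulR_smulC c x b } ‖x‖ (hX.norm_smulR_le x)

@[simp] lemma smulL_apply (x : X) (b : B) : hX.smulL x b = hX.smulR x b := rfl

/-- Right multiplication by a fixed scalar, as a continuous linear map. -/
def mulRight (b : B) : X →L[ℂ] X :=
  LinearMap.mkContinuous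
    { toFun := fun x => hX.smulR x b
      map_add' := fun x y => hX.add_smulR x y b
      map_smul' := fun c x => hX.smulC_smulR c x b } ‖b‖
    (fun x => (hX.norm_smulR_le x b).trans_eq (mul_comm _ _))

lemma continuous_inner_left (y : X) : Continuous fun x => hX.inner x y := by
  simp_rw [← hX.star_inner y]
  exact continuous_star.comp (hX.innerL y).continuous

/-- The algebra of adjointable operators on `X`. -/
def adjointable : Subalgebra ℂ (X →L[ℂ] X) where
  carrier := {T | ∃ S : X →L[ℂ] X, hX.IsAdjointPair hX T S}
  mul_mem' := by
    rintro T T' ⟨S, hS⟩ ⟨S', hS'⟩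
    exact ⟨S' * S, fun x y => (hS (T' x) y).trans (hS' x (S y))⟩
  add_mem' := by
    rintro T T' ⟨S, hS⟩ ⟨S', hS'⟩
    refine ⟨S + S', fun x y => ?_⟩
    simp only [_root_.add_apply, hX.inner_add_left, hX.inner_add_right]
    rw [hS x y, hS' x y]
  algebraMap_mem' := by
    intro c
    refine ⟨algebraMap ℂ _ (star c), fun x y => ?_⟩
    simp [Algebra.algebraMap_eq_smul_one, hX.inner_smulC_left, hX.inner_smulC_right]

/-- The adjointable operators on `X`, as a type. -/
abbrev Adj : Type u := hX.adjointable

variable {hX}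

namespace Adj

lemma ext_apply {a b : hX.Adj} (h : ∀ x, a.1 x = b.1 x) : a = b :=
  Subtype.ext (ContinuousLinearMap.ext h)

instance : Star hX.Adj where
  star a := ⟨a.2.choose, a.1, fun x y => by
    rw [← hX.star_inner y, ← a.2.choose_spec y x, hX.star_inner]⟩

lemma inner_apply_left (a : hX.Adj) (x y : X) :
    hX.inner (a.1 x) y = hX.inner x ((star a).1 y) :=
  a.2.choose_spec x y

lemma inner_star_apply_left (a : hX.Adj) (x y : X) :
    hX.inner ((star a).1 x) y = hX.inner x (a.1 y) := by
  rw [← hX.star_inner y, ← a.inner_apply_left, hX.star_inner]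

lemma eq_star_of_isAdjointPair {a b : hX.Adj} (h : hX.IsAdjointPair hX a.1 b.1) : b = star a :=
  ext_apply fun y => hX.ext_inner fun w => by rw [← h w y, a.inner_apply_left]

lemma map_smulR (a : hX.Adj) (x : X) (b : B) : a.1 (hX.smulR x b) = hX.smulR (a.1 x) b :=
  hX.ext_inner fun w => by
    rw [← a.inner_star_apply_left, hX.inner_smulR_right, hX.inner_smulR_right,
      a.inner_star_apply_left]

instance : StarRing hX.Adj where
  star_involutive a := (eq_star_of_isAdjointPair a.inner_star_apply_left).symm
  star_mul a b := (eq_star_of_isAdjointPair fun x y =>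
    (a.inner_apply_left (b.1 x) y).trans (b.inner_apply_left x _)).symm
  star_add a b := by
    refine (eq_star_of_isAdjointPair fun x y => ?_).symm
    have h : (a + b).1 x = a.1 x + b.1 x := rfl
    have h' : (star a + star b).1 y = (star a).1 y + (star b).1 y := rfl
    rw [h, h', hX.inner_add_left, hX.inner_add_right, a.inner_apply_left, b.inner_apply_left]

instance : StarModule ℂ hX.Adj where
  star_smul c a := by
    refine (eq_star_of_isAdjointPair fun x y => ?_).symm
    have h : (c • a).1 x = c • a.1 x := rfl
    have h' : (star c • star a).1 y = star c • (star a).1 y := rfl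
    rw [h, h', hX.inner_smulC_left, hX.inner_smulC_right, a.inner_apply_left]

lemma norm_le_bound (a : hX.Adj) {r : ℝ} (hr : 0 ≤ r) (h : ∀ x, ‖a.1 x‖ ≤ r * ‖x‖) : ‖a‖ ≤ r :=
  ContinuousLinearMap.opNorm_le_bound _ hr h

lemma norm_apply_le (a : hX.Adj) (x : X) : ‖a.1 x‖ ≤ ‖a‖ * ‖x‖ := a.1.le_opNorm x

lemma norm_star_le (a : hX.Adj) : ‖star a‖ ≤ ‖a‖ := by
  refine norm_le_bound _ (norm_nonneg _) fun x => ?_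
  rcases (norm_nonneg ((star a).1 x)).eq_or_lt with h | h
  · rw [← h]; positivity
  · refine le_of_mul_le_mul_right ?_ h
    rw [← pow_two, hX.norm_inner_self, ← a.inner_apply_left]
    calc _ ≤ ‖a.1 ((star a).1 x)‖ * ‖x‖ := hX.norm_inner_le _ _
      _ ≤ ‖a‖ * ‖(star a).1 x‖ * ‖x‖ := by gcongr; exact norm_apply_le _ _
      _ = _ := by ring

instance : CStarRing hX.Adj where
  norm_mul_self_le a := by
    rw [← pow_two]
    refine (pow_le_pow_left₀ (norm_nonneg a) (?_ : _ ≤ √‖star a * a‖) 2).trans_eq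
      (Real.sq_sqrt (norm_nonneg _))
    refine norm_le_bound _ (Real.sqrt_nonneg _) fun x => ?_
    refine (pow_le_pow_iff_left₀ (norm_nonneg _) (by positivity) two_ne_zero).1 ?_
    have hsq : √‖star a * a‖ ^ 2 = ‖star a * a‖ := Real.sq_sqrt (norm_nonneg _)
    rw [mul_pow, hsq, hX.norm_inner_self, a.inner_apply_left]
    calc _ ≤ ‖x‖ * ‖(star a * a).1 x‖ := hX.norm_inner_le _ _
      _ ≤ ‖x‖ * (‖star a * a‖ * ‖x‖) := by gcongr; exact norm_apply_le _ _
      _ = _ := by ring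

lemma isClosed_adjointable : IsClosed (hX.adjointable : Set (X →L[ℂ] X)) := by
  refine isClosed_of_closure_subset fun T hT => ?_
  obtain ⟨u, hu, hlim⟩ := mem_closure_iff_seq_limit.1 hT
  let a : ℕ → hX.Adj := fun n => ⟨u n, hu n⟩
  have hc : CauchySeq fun n => (star (a n)).1 := by
    have h := hlim.cauchySeq
    rw [Metric.cauchySeq_iff] at h ⊢
    intro ε hε
    obtain ⟨N, hN⟩ := h ε hε
    refine ⟨N, fun m hm n hn => lt_of_le_of_lt ?_ (hN m hm n hn)⟩
    rw [dist_eq_norm, dist_eq_norm]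
    have := norm_star_le (a m - a n)
    rw [star_sub] at this
    exact this
  obtain ⟨S, hS⟩ := cauchySeq_tendsto_of_complete hc
  refine ⟨S, fun x y => ?_⟩
  have h1 : Tendsto (fun n => hX.inner (u n x) y) atTop (𝓝 (hX.inner (T x) y)) :=
    ((hX.continuous_inner_left y).tendsto _).comp
      (((ContinuousLinearMap.apply ℂ X x).continuous.tendsto T).comp hlim)
  have h2 : Tendsto (fun n => hX.inner x ((star (a n)).1 y)) atTop (𝓝 (hX.inner x (S y))) :=
    ((hX.innerL x).continuous.tendsto _).comp
      (((ContinuousLinearMap.apply ℂ X y).continuous.tendsto S).comp hS)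
  refine tendsto_nhds_unique h1 (h2.congr fun n => ?_)
  exact ((a n).inner_apply_left x y).symm

instance : CompleteSpace hX.Adj := isClosed_adjointable.completeSpace_coe

instance : CStarAlgebra hX.Adj where

variable (hX) in
/-- The rank-one operator `z ↦ u⟨v, z⟩`. -/
def rankOne (u v : X) : hX.Adj :=
  ⟨(hX.smulL u).comp (hX.innerL v), (hX.smulL v).comp (hX.innerL u), fun x y => by
    simp [hX.inner_smulR_left, hX.inner_smulR_right, hX.star_inner]⟩

@[simp] lemma rankOne_apply (u v z : X) :
    (rankOne hX u v).1 z = hX.smulR u (hX.inner v z) := rfl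

lemma mul_rankOne (a : hX.Adj) (u v : X) : a * rankOne hX u v = rankOne hX (a.1 u) v :=
  ext_apply fun _ => a.map_smulR u _

lemma rankOne_mul (a : hX.Adj) (u v : X) : rankOne hX u v * a = rankOne hX u ((star a).1 v) :=
  ext_apply fun z => by
    change hX.smulR u (hX.inner v (a.1 z)) = hX.smulR u (hX.inner ((star a).1 v) z)
    rw [a.inner_star_apply_left]

lemma rankOne_smulR (u v : X) (b : B) :
    rankOne hX (hX.smulR u b) v = rankOne hX u (hX.smulR v (star b)) :=
  ext_apply fun z => by
    simp only [rankOne_apply, hX.inner_smulR_left, star_star, hX.smulR_mul]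

lemma norm_rankOne_le (u v : X) : ‖rankOne hX u v‖ ≤ ‖u‖ * ‖v‖ := by
  refine norm_le_bound _ (by positivity) fun z => (hX.norm_smulR_le _ _).trans ?_
  rw [mul_assoc]
  gcongr
  exact hX.norm_inner_le v z

lemma rankOne_sub_left (u u' v : X) :
    rankOne hX (u - u') v = rankOne hX u v - rankOne hX u' v :=
  ext_apply fun _ => hX.sub_smulR _ _ _

variable (hX) in
/-- The linear span of the rank-one operators with vectors in `S`. -/
def finiteRank (S : Submodule ℂ X) : Submodule ℂ hX.Adj :=
  Submodule.span ℂ {a | ∃ u ∈ S, ∃ v ∈ S, a = rankOne hX u v}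

variable (hX) in
/-- The closed linear span of the rank-one operators with vectors in `S`. -/
def compacts (S : Submodule ℂ X) : Submodule ℂ hX.Adj :=
  (finiteRank hX S).topologicalClosure

lemma rankOne_mem_compacts {S : Submodule ℂ X} {u v : X} (hu : u ∈ S) (hv : v ∈ S) :
    rankOne hX u v ∈ compacts hX S :=
  Submodule.le_topologicalClosure _ (Submodule.subset_span ⟨u, hu, v, hv, rfl⟩)

lemma isClosed_compacts (S : Submodule ℂ X) : IsClosed (compacts hX S : Set hX.Adj) :=
  Submodule.isClosed_topologicalClosure _

/-- A continuous linear map on the adjointable operators sends `compacts hX S` into a closed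
submodule as soon as it does so for the rank-one operators. -/
lemma map_mem_of_rankOne {V : Type*} [NormedAddCommGroup V] [NormedSpace ℂ V]
    {S : Submodule ℂ X} (f : hX.Adj →L[ℂ] V) {W : Submodule ℂ V} (hW : IsClosed (W : Set V))
    (h : ∀ u ∈ S, ∀ v ∈ S, f (rankOne hX u v) ∈ W) {a : hX.Adj} (ha : a ∈ compacts hX S) :
    f a ∈ W := by
  have h1 : finiteRank hX S ≤ W.comap f.toLinearMap :=
    Submodule.span_le.2 (by rintro _ ⟨u, hu, v, hv, rfl⟩; exact h u hu v hv)
  exact Submodule.topologicalClosure_minimal _ h1 (hW.preimage f.continuous) ha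

lemma mul_mem_compacts_left {S : Submodule ℂ X} (b : hX.Adj) (hb : ∀ u ∈ S, b.1 u ∈ S)
    {a : hX.Adj} (ha : a ∈ compacts hX S) : b * a ∈ compacts hX S :=
  map_mem_of_rankOne (ContinuousLinearMap.mul ℂ hX.Adj b) (isClosed_compacts S)
    (fun u hu v hv => by
      rw [ContinuousLinearMap.mul_apply', mul_rankOne]
      exact rankOne_mem_compacts (hb u hu) hv) ha

lemma mul_mem_compacts_right {S : Submodule ℂ X} (b : hX.Adj) (hb : ∀ u ∈ S, (star b).1 u ∈ S)
    {a : hX.Adj} (ha : a ∈ compacts hX S) : a * b ∈ compacts hX S :=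
  map_mem_of_rankOne ((ContinuousLinearMap.mul ℂ hX.Adj).flip b) (isClosed_compacts S)
    (fun u hu v hv => by
      rw [ContinuousLinearMap.flip_apply, ContinuousLinearMap.mul_apply', rankOne_mul]
      exact rankOne_mem_compacts hu (hb v hv)) ha

lemma exists_sum_of_mem_finiteRank {S : Submodule ℂ X} {a : hX.Adj} (ha : a ∈ finiteRank hX S) :
    ∃ (n : ℕ) (u v : Fin n → X), (∀ i, u i ∈ S ∧ v i ∈ S) ∧
      ∀ z, a.1 z = ∑ i, hX.smulR (u i) (hX.inner (v i) z) := by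
  induction ha using Submodule.span_induction with
  | mem a h =>
    obtain ⟨u, hu, v, hv, rfl⟩ := h
    exact ⟨1, fun _ => u, fun _ => v, fun _ => ⟨hu, hv⟩, fun z => by simp⟩
  | zero => exact ⟨0, Fin.elim0, Fin.elim0, fun i => i.elim0, fun z => by simp⟩
  | add a b _ _ iha ihb =>
    obtain ⟨n, u, v, h, e⟩ := iha
    obtain ⟨n', u', v', h', e'⟩ := ihb
    refine ⟨n + n', Fin.append u u', Fin.append v v', fun i => ?_, fun z => ?_⟩
    · induction i using Fin.addCases with
      | left i => simpa using h i
      | right i => simpa using h' i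
    · rw [Fin.sum_univ_add]
      simp only [Fin.append_left, Fin.append_right, ← e, ← e']
      rfl
  | smul c a _ iha =>
    obtain ⟨n, u, v, h, e⟩ := iha
    refine ⟨n, fun i => c • u i, v, fun i => ⟨S.smul_mem c (h i).1, (h i).2⟩, fun z => ?_⟩
    simp only [hX.smulC_smulR, ← Finset.smul_sum, ← e]
    rfl

lemma isCptVecIn_iff (S : Submodule ℂ X) (T : X → X) :
    IsCptVecIn hX S T ↔ ∃ a ∈ compacts hX S, T = a.1 := by
  constructor
  · intro h
    have hpos : ∀ n : ℕ, 0 < 1 / ((n : ℝ) + 1) := fun n => Nat.one_div_pos_of_nat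
    choose n u v huv hT using fun k : ℕ => h _ (hpos k)
    let s : ℕ → hX.Adj := fun k => ∑ i, rankOne hX (u k i) (v k i)
    have hs : ∀ k, s k ∈ finiteRank hX S := fun k =>
      Submodule.sum_mem _ fun i _ =>
        Submodule.subset_span ⟨_, (huv k i).1, _, (huv k i).2, rfl⟩
    have hsz : ∀ k z, (s k).1 z = ∑ i, hX.smulR (u k i) (hX.inner (v k i) z) := by
      intro k z
      simp [s]
    have hT' : ∀ k z, ‖T z - (s k).1 z‖ ≤ 1 / ((k : ℝ) + 1) * ‖z‖ := fun k z => by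
      rw [hsz]; exact hT k z
    have hc : CauchySeq s := by
      refine cauchySeq_of_le_tendsto_0 (fun N : ℕ => 2 * (1 / ((N : ℝ) + 1))) ?_ ?_
      · intro k l N hk hl
        rw [dist_eq_norm]
        refine norm_le_bound _ (by positivity) fun z => ?_
        have e : (s k - s l).1 z = (T z - (s l).1 z) - (T z - (s k).1 z) := by
          simp
        rw [e]
        calc _ ≤ 1 / ((l : ℝ) + 1) * ‖z‖ + 1 / ((k : ℝ) + 1) * ‖z‖ :=
              (norm_sub_le _ _).trans (add_le_add (hT' l z) (hT' k z))
          _ ≤ 1 / ((N : ℝ) + 1) * ‖z‖ + 1 / ((N : ℝ) + 1) * ‖z‖ := by gcongr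
          _ = _ := by ring
      · simpa using tendsto_one_div_add_atTop_nhds_zero_nat.const_mul (2 : ℝ)
    obtain ⟨a, ha⟩ := cauchySeq_tendsto_of_complete hc
    refine ⟨a, mem_closure_of_tendsto ha (.of_forall hs), funext fun z => ?_⟩
    have h1 : Tendsto (fun k => (s k).1 z) atTop (𝓝 (a.1 z)) :=
      ((ContinuousLinearMap.apply ℂ X z).continuous.tendsto a.1).comp
        ((continuous_subtype_val.tendsto a).comp ha)
    refine tendsto_nhds_unique ?_ h1
    rw [tendsto_iff_norm_sub_tendsto_zero]
    refine squeeze_zero (fun _ => norm_nonneg _)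
      (fun k => (norm_sub_rev _ _).trans_le (hT' k z)) ?_
    simpa using (tendsto_one_div_add_atTop_nhds_zero_nat (𝕜 := ℝ)).mul_const ‖z‖
  · rintro ⟨a, ha, rfl⟩ ε hε
    obtain ⟨b, hb, hab⟩ := Metric.mem_closure_iff.1 ha ε hε
    obtain ⟨n, u, v, huv, e⟩ := exists_sum_of_mem_finiteRank hb
    refine ⟨n, u, v, huv, fun z => ?_⟩
    rw [← e]
    refine (norm_apply_le (a - b) z).trans ?_
    gcongr
    rw [← dist_eq_norm]
    exact hab.le

lemma isCptOn_iff (T : X → X) : IsCptOn hX id T ↔ ∃ a ∈ compacts hX ⊤, T = a.1 := by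
  rw [← isCptVecIn_iff]
  simp [IsCptOn, IsCptVecIn]

end Adj

end HilbertModule

section FunctionalCalculus

variable {A A' : Type*} [NonUnitalCStarAlgebra A] [NonUnitalCStarAlgebra A']

lemma norm_sub_cfcₙ_conj_le {h : A} (hh : IsSelfAdjoint h) {f : ℝ → ℝ} (hf : Continuous f)
    (hf0 : f 0 = 0) {s : ℝ} (hs : ∀ t, |t * (1 - f t) ^ 2| ≤ s) :
    ‖h - h * cfcₙ f h - cfcₙ f h * h + cfcₙ f h * (h * cfcₙ f h)‖ ≤ s := by
  have e : h - h * cfcₙ f h - cfcₙ f h * h + cfcₙ f h * (h * cfcₙ f h)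
      = cfcₙ (fun t => t - t * f t - f t * t + f t * (t * f t)) h := by
    rw [cfcₙ_add (a := h) (fun t => t - t * f t - f t * t) (fun t => f t * (t * f t))
        (by fun_prop) (by simp) (by fun_prop) (by simp),
      cfcₙ_sub (a := h) (fun t => t - t * f t) (fun t => f t * t)
        (by fun_prop) (by simp) (by fun_prop) (by simp),
      cfcₙ_sub (a := h) (fun t => t) (fun t => t * f t)
        (by fun_prop) (by simp) (by fun_prop) (by simp),
      cfcₙ_mul (a := h) f (fun t => t * f t) (by fun_prop) hf0 (by fun_prop) (by simp),
      cfcₙ_mul (a := h) f (fun t => t) (by fun_prop) hf0 (by fun_prop) (by simp),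
      cfcₙ_mul (a := h) (fun t => t) f (by fun_prop) (by simp) (by fun_prop) hf0,
      cfcₙ_id' ℝ h]
  rw [e]
  refine norm_cfcₙ_le fun t _ => ?_
  rw [Real.norm_eq_abs]
  refine le_of_eq_of_le (congrArg _ ?_) (hs t)
  ring

/-- An element of the kernel of `φ` that cuts `h` down to the size of its image. -/
lemma exists_cutoff_of_norm_map_le (φ : A →⋆ₙₐ[ℂ] A') {h : A} (hh : IsSelfAdjoint h) {s : ℝ}
    (hs : 0 < s) (hφ : ‖φ h‖ ≤ s) :
    ∃ e : A, IsSelfAdjoint e ∧ φ e = 0 ∧ ‖h - h * e - e * h + e * (h * e)‖ ≤ s := by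
  have hmax : ∀ t : ℝ, 0 < max |t| s := fun t => lt_max_of_lt_right hs
  set f : ℝ → ℝ := fun t => 1 - √(s / max |t| s) with hf_def
  have hf : Continuous f := by
    refine continuous_const.sub (Real.continuous_sqrt.comp ?_)
    exact continuous_const.div (by fun_prop) fun t => (hmax t).ne'
  have hzero : ∀ t, |t| ≤ s → f t = 0 := by
    intro t ht
    simp only [hf_def, max_eq_right ht, div_self hs.ne', Real.sqrt_one, sub_self]
  refine ⟨cfcₙ f h, cfcₙ_predicate f h, ?_,
    norm_sub_cfcₙ_conj_le hh hf (hzero 0 (by simpa using hs.le)) fun t => ?_⟩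
  · rw [φ.map_cfcₙ (S := ℂ) f h hf.continuousOn (hzero 0 (by simpa using hs.le))
      (AddMonoidHomClass.continuous_of_bound φ 1 fun a => by
        simpa using NonUnitalStarAlgHom.norm_apply_le φ a) hh (hh.map φ)]
    rw [cfcₙ_congr (g := fun _ => 0) (a := φ h), cfcₙ_const_zero]
    intro t ht
    refine hzero t ?_
    have := norm_apply_le_norm_cfcₙ (fun t : ℝ => t) (φ h) ht (ha := hh.map φ)
    rw [cfcₙ_id' ℝ (φ h) (ha := hh.map φ)] at this
    exact this.trans hφ
  · have : (1 - f t) ^ 2 = s / max |t| s := by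
      rw [hf_def]
      simp only [sub_sub_cancel]
      exact Real.sq_sqrt (div_nonneg hs.le (hmax t).le)
    rw [this, abs_mul, abs_of_pos (div_pos hs (hmax t)), ← mul_div_assoc, div_le_iff₀ (hmax t),
      mul_comm]
    gcongr
    exact le_max_left _ _

lemma exists_norm_sub_mul_star_mul_self_mul_le (a : A) {δ : ℝ} (hδ : 0 < δ) :
    ∃ c : A, ‖a - a * (star a * a * c)‖ ≤ δ := by
  set h := star a * a with hdef
  have hh : IsSelfAdjoint h := .star_mul_self a
  have hpos : ∀ t : ℝ, 0 < t ^ 2 + (δ ^ 2) ^ 2 := fun t => by positivity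
  have hg : Continuous fun t : ℝ => t / (t ^ 2 + (δ ^ 2) ^ 2) :=
    continuous_id.div (by fun_prop) fun t => (hpos t).ne'
  set e := cfcₙ (fun t : ℝ => t * (t / (t ^ 2 + (δ ^ 2) ^ 2))) h with he
  have he' : e = h * cfcₙ (fun t : ℝ => t / (t ^ 2 + (δ ^ 2) ^ 2)) h := by
    rw [he, cfcₙ_mul (a := h) (fun t => t) _ (by fun_prop) (by simp) hg.continuousOn (by simp),
      cfcₙ_id' ℝ h]
  refine ⟨cfcₙ (fun t : ℝ => t / (t ^ 2 + (δ ^ 2) ^ 2)) h, ?_⟩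
  rw [← he']
  have hes : star e = e := (cfcₙ_predicate _ h : IsSelfAdjoint _)
  refine (pow_le_pow_iff_left₀ (norm_nonneg _) hδ.le two_ne_zero).1 ?_
  rw [pow_two, ← CStarRing.norm_star_mul_self]
  have : star (a - a * e) * (a - a * e) = h - h * e - e * h + e * (h * e) := by
    rw [hdef, star_sub, star_mul, hes]
    noncomm_ring
  rw [this]
  refine norm_sub_cfcₙ_conj_le hh (continuous_id.mul hg) (by simp) fun t => ?_
  set η := δ ^ 2
  have hη : 0 < η := by positivity
  have e1 : 1 - t * (t / (t ^ 2 + η ^ 2)) = η ^ 2 / (t ^ 2 + η ^ 2) := by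
    have := (hpos t).ne'
    field_simp
    ring
  change |t * (1 - t * (t / (t ^ 2 + η ^ 2))) ^ 2| ≤ η
  rw [e1, abs_mul, abs_of_nonneg (by positivity : (0 : ℝ) ≤ (η ^ 2 / (t ^ 2 + η ^ 2)) ^ 2),
    div_pow, ← mul_div_assoc, div_le_iff₀ (pow_pos (hpos t) 2)]
  have h1 : |t| * η ≤ t ^ 2 + η ^ 2 := by
    rw [← sq_abs t]; nlinarith [sq_nonneg (|t| - η), sq_nonneg (|t|), sq_nonneg η]
  have h2 : η ^ 2 ≤ t ^ 2 + η ^ 2 := by nlinarith [sq_nonneg t]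
  calc |t| * (η ^ 2) ^ 2 = η * (|t| * η * η ^ 2) := by ring
    _ ≤ η * ((t ^ 2 + η ^ 2) * (t ^ 2 + η ^ 2)) := by gcongr
    _ = _ := by ring

end FunctionalCalculus

lemma exists_eq_of_mem_closure_map {E G : Type*} [NormedAddCommGroup E] [NormedSpace ℂ E]
    [CompleteSpace E] [NormedAddCommGroup G] [NormedSpace ℂ G] (f : E →L[ℂ] G)
    {V : Submodule ℂ E} (hV : IsClosed (V : Set E))
    (h : ∀ x ∈ V, ∃ x' ∈ V, f x' = f x ∧ ‖x'‖ ≤ 2 * ‖f x‖) {y : G}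
    (hy : y ∈ (V.map f.toLinearMap).topologicalClosure) : ∃ x ∈ V, f x = y := by
  have : CompleteSpace V := hV.completeSpace_coe
  let g : NormedAddGroupHom V G := AddMonoidHom.mkNormedAddGroupHom
    (f.toLinearMap.comp V.subtype).toAddMonoidHom ‖f‖ fun x => f.le_opNorm x
  have hg : g.SurjectiveOnWith (V.map f.toLinearMap).toAddSubgroup 2 := by
    rintro _ ⟨x, hx, rfl⟩
    obtain ⟨x', hx', e, hle⟩ := h x hx
    exact ⟨⟨x', hx'⟩, e, hle⟩
  obtain ⟨x, hx, -⟩ := controlled_closure_of_complete two_pos one_pos hg y hy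
  exact ⟨x.1, x.2, hx⟩

namespace HilbertModule

section Morphism

variable {C C' M N : Type u} [NonUnitalCStarAlgebra C] [NonUnitalCStarAlgebra C']
  [NormedAddCommGroup M] [NormedSpace ℂ M] [CompleteSpace M]
  [NormedAddCommGroup N] [NormedSpace ℂ N] [CompleteSpace N]
  {hM : HilbertModule C M} {hN : HilbertModule C' N} {q : C →⋆ₙₐ[ℂ] C'}

lemma exists_norm_sub_smulR_le {Q : M → N}
    (hQ : ∀ m m', hN.inner (Q m) (Q m') = q (hM.inner m m')) (m : M) {r : ℝ} (hr : 0 < r)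
    (hm : ‖Q m‖ ≤ r) : ∃ e : C, q e = 0 ∧ ‖m - hM.smulR m e‖ ≤ r := by
  obtain ⟨e, he, hqe, hle⟩ := exists_cutoff_of_norm_map_le q (hM.star_inner_self m)
    (pow_pos hr 2) (by rw [← hQ, ← hN.norm_inner_self]; gcongr)
  refine ⟨e, hqe, (pow_le_pow_iff_left₀ (norm_nonneg _) hr.le two_ne_zero).1 ?_⟩
  rw [hM.norm_inner_self]
  refine le_of_eq_of_le (congrArg _ ?_) hle
  simp only [hM.inner_sub_left, hM.inner_sub_right, hM.inner_smulR_left, hM.inner_smulR_right,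
    he.star_eq]
  noncomm_ring

lemma map_smulR_of_inner {Q : M → N} (hQ : ∀ m m', hN.inner (Q m) (Q m') = q (hM.inner m m'))
    (m : M) (c : C) : Q (hM.smulR m c) = hN.smulR (Q m) (q c) := by
  rw [← sub_eq_zero]
  apply hN.eq_zero_of_inner_self
  simp only [hN.inner_sub_left, hN.inner_sub_right, hN.inner_smulR_left, hN.inner_smulR_right,
    hQ, hM.inner_smulR_left, hM.inner_smulR_right, map_mul, map_star]
  noncomm_ring

variable {Q : M →L[ℂ] N} (hQ : ∀ m m', hN.inner (Q m) (Q m') = q (hM.inner m m'))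
  (hsurj : Function.Surjective Q)

include hQ

lemma Adj.map_apply_eq_zero (a : hM.Adj) {m : M} (hm : Q m = 0) : Q (a.1 m) = 0 := by
  apply hN.eq_zero_of_inner_self
  rw [hQ, a.inner_apply_left, ← hQ, hm, hN.inner_zero_left]

include hsurj

lemma Adj.exists_descend (a : hM.Adj) : ∃ b : hN.Adj, ∀ m, Q (a.1 m) = b.1 (Q m) := by
  obtain ⟨K, -, hK⟩ := Q.exists_preimage_norm_le hsurj
  choose g hg hgK using hK
  have key : ∀ (c : hM.Adj) {m m' : M}, Q m = Q m' → Q (c.1 m) = Q (c.1 m') := by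
    intro c m m' h
    rw [← sub_eq_zero, ← map_sub, ← map_sub]
    exact c.map_apply_eq_zero hQ (by rw [map_sub, h, sub_self])
  let T : hM.Adj → N →L[ℂ] N := fun c => LinearMap.mkContinuous
    { toFun := fun y => Q (c.1 (g y))
      map_add' := fun x y => by
        rw [← map_add, ← map_add]
        exact key c (by simp [hg])
      map_smul' := fun z y => by
        rw [RingHom.id_apply, ← map_smul, ← map_smul]
        exact key c (by simp [hg]) } (‖Q‖ * ‖c.1‖ * K) fun y => by
    refine (Q.le_opNorm _).trans ?_
    rw [mul_assoc, mul_assoc]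
    gcongr
    exact (c.1.le_opNorm _).trans (by gcongr; exact hgK y)
  refine ⟨⟨T a, T (star a), fun x y => ?_⟩, fun m => key a (hg _).symm⟩
  change hN.inner (Q (a.1 (g x))) y = hN.inner x (Q ((star a).1 (g y)))
  conv_lhs => rw [← hg y]
  conv_rhs => rw [← hg x]
  rw [hQ, hQ, a.inner_apply_left]

/-- The `*`-homomorphism between algebras of adjointable operators induced by a surjective
morphism of Hilbert modules. -/
def Adj.descend : hM.Adj →⋆ₙₐ[ℂ] hN.Adj where
  toFun a := (a.exists_descend hQ hsurj).choose
  map_smul' c a := ext_apply <| hsurj.forall.2 fun m => by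
    change _ = c • (a.exists_descend hQ hsurj).choose.1 (Q m)
    rw [← (Adj.exists_descend hQ hsurj _).choose_spec,
      ← (Adj.exists_descend hQ hsurj _).choose_spec, ← map_smul]
    rfl
  map_zero' := ext_apply <| hsurj.forall.2 fun m => by
    rw [← (Adj.exists_descend hQ hsurj _).choose_spec]
    exact map_zero Q
  map_add' a b := ext_apply <| hsurj.forall.2 fun m => by
    change _ = (a.exists_descend hQ hsurj).choose.1 (Q m) +
      (b.exists_descend hQ hsurj).choose.1 (Q m)
    rw [← (Adj.exists_descend hQ hsurj _).choose_spec,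
      ← (Adj.exists_descend hQ hsurj _).choose_spec,
      ← (Adj.exists_descend hQ hsurj _).choose_spec, ← map_add]
    rfl
  map_mul' a b := ext_apply <| hsurj.forall.2 fun m => by
    change _ = (a.exists_descend hQ hsurj).choose.1 ((b.exists_descend hQ hsurj).choose.1 (Q m))
    rw [← (Adj.exists_descend hQ hsurj _).choose_spec,
      ← (Adj.exists_descend hQ hsurj _).choose_spec,
      ← (Adj.exists_descend hQ hsurj _).choose_spec]
    rfl
  map_star' a := eq_star_of_isAdjointPair <| hsurj.forall.2 fun m => hsurj.forall.2 fun m' => by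
    rw [← (Adj.exists_descend hQ hsurj _).choose_spec,
      ← (Adj.exists_descend hQ hsurj _).choose_spec, hQ, hQ, a.inner_apply_left]

namespace Adj

lemma descend_apply (a : hM.Adj) (m : M) : (descend hQ hsurj a).1 (Q m) = Q (a.1 m) :=
  ((a.exists_descend hQ hsurj).choose_spec m).symm

lemma descend_rankOne (u v : M) :
    descend hQ hsurj (rankOne hM u v) = rankOne hN (Q u) (Q v) :=
  ext_apply <| hsurj.forall.2 fun m => by
    rw [descend_apply, rankOne_apply, rankOne_apply, hQ, map_smulR_of_inner hQ]

/-- `Adj.descend` as a continuous linear map. -/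
def descendL : hM.Adj →L[ℂ] hN.Adj :=
  LinearMap.mkContinuous
    { toFun := descend hQ hsurj
      map_add' := map_add _
      map_smul' := map_smul _ } 1
    fun a => by simpa using NonUnitalStarAlgHom.norm_apply_le (descend hQ hsurj) a

lemma descendL_apply (a : hM.Adj) : descendL hQ hsurj a = descend hQ hsurj a := rfl

lemma descend_mem_compacts {a : hM.Adj} (ha : a ∈ compacts hM ⊤) :
    descend hQ hsurj a ∈ compacts hN ⊤ :=
  map_mem_of_rankOne (descendL hQ hsurj) (isClosed_compacts _) (fun u _ v _ => by
    rw [descendL_apply, descend_rankOne]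
    exact rankOne_mem_compacts trivial trivial) ha

lemma exists_descend_eq_of_mem_compacts {b : hN.Adj} (hb : b ∈ compacts hN ⊤) :
    ∃ a ∈ compacts hM ⊤, descend hQ hsurj a = b := by
  refine exists_eq_of_mem_closure_map (descendL hQ hsurj) (isClosed_compacts ⊤)
    (fun a ha => ?_) (Submodule.topologicalClosure_mono (Submodule.span_le.2 ?_) hb)
  · rw [descendL_apply]
    rcases (norm_nonneg (descend hQ hsurj a)).eq_or_lt with h | h
    · refine ⟨0, zero_mem _, ?_, by simp⟩
      rw [map_zero, eq_comm, ← norm_eq_zero, ← h]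
    · obtain ⟨e, he, hle⟩ := exists_norm_sub_smulR_le (hM := trivHM hM.Adj) (hN := trivHM hN.Adj)
        (q := descend hQ hsurj) (Q := descend hQ hsurj)
        (fun a b => by simp [trivHM, map_mul, map_star]) a (mul_pos two_pos h)
        (by linarith)
      refine ⟨a - a * e, sub_mem ha (mul_mem_compacts_right (S := ⊤) e (fun _ _ => trivial) ha), ?_, hle⟩
      rw [descendL_apply, map_sub, map_mul, he, mul_zero, sub_zero]
  · rintro _ ⟨u, -, v, -, rfl⟩
    obtain ⟨u, rfl⟩ := hsurj u
    obtain ⟨v, rfl⟩ := hsurj v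
    exact ⟨rankOne hM u v, rankOne_mem_compacts trivial trivial, descend_rankOne hQ hsurj u v⟩

omit hsurj

lemma rankOne_mem_compacts_ker {u : M} (hu : Q u = 0) (v : M) :
    rankOne hM u v ∈ compacts hM (LinearMap.ker Q.toLinearMap) := by
  refine (isClosed_compacts _).closure_subset (Metric.mem_closure_iff.2 fun ε hε => ?_)
  have hpos : 0 < ε / (‖v‖ + 1) := by positivity
  obtain ⟨e, he, hle⟩ := exists_norm_sub_smulR_le hQ u hpos (by rw [hu, norm_zero]; exact hpos.le)
  refine ⟨rankOne hM (hM.smulR u e) v, ?_, ?_⟩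
  · rw [rankOne_smulR]
    refine rankOne_mem_compacts hu ?_
    change Q _ = 0
    rw [map_smulR_of_inner hQ, map_star, he, star_zero, hN.smulR_zero]
  · rw [dist_eq_norm, ← rankOne_sub_left]
    calc _ ≤ ε / (‖v‖ + 1) * ‖v‖ := (norm_rankOne_le _ _).trans (by gcongr)
      _ < ε / (‖v‖ + 1) * (‖v‖ + 1) := by gcongr; linarith
      _ = ε := by field_simp

lemma mem_compacts_ker_iff {a : hM.Adj} (ha : a ∈ compacts hM ⊤) :
    (∀ m, Q (a.1 m) = 0) ↔ a ∈ compacts hM (LinearMap.ker Q.toLinearMap) := by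
  constructor
  · intro h
    refine (isClosed_compacts _).closure_subset (Metric.mem_closure_iff.2 fun ε hε => ?_)
    obtain ⟨c, hc⟩ := exists_norm_sub_mul_star_mul_self_mul_le a (half_pos hε)
    have hk : star a * a * c ∈ compacts hM ⊤ :=
      mul_mem_compacts_right (S := ⊤) c (fun _ _ => trivial)
        (mul_mem_compacts_left (S := ⊤) (star a) (fun _ _ => trivial) ha)
    refine ⟨a * (star a * a * c), ?_, ?_⟩
    · exact map_mem_of_rankOne (ContinuousLinearMap.mul ℂ hM.Adj a) (isClosed_compacts _)
        (fun u _ v _ => by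
          rw [ContinuousLinearMap.mul_apply', mul_rankOne]
          exact rankOne_mem_compacts_ker hQ (h u) v) hk
    · rw [dist_eq_norm]
      exact hc.trans_lt (half_lt_self hε)
  · intro h m
    let f : hM.Adj →L[ℂ] N :=
      Q.comp ((ContinuousLinearMap.apply ℂ M m).comp hM.adjointable.toSubmodule.subtypeL)
    refine (Submodule.mem_bot ℂ).1 (map_mem_of_rankOne f isClosed_singleton ?_ h)
    intro u hu v _
    change Q (hM.smulR u (hM.inner v m)) = 0
    rw [map_smulR_of_inner hQ, show Q u = 0 from hu, hN.zero_smulR]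

end Adj

end Morphism

end HilbertModule

namespace HilbertModule

variable {C C' M N : Type u} [NonUnitalCStarAlgebra C] [NonUnitalCStarAlgebra C']
  [NormedAddCommGroup M] [NormedSpace ℂ M] [CompleteSpace M]
  [NormedAddCommGroup N] [NormedSpace ℂ N] [CompleteSpace N]
  {hM : HilbertModule C M} {hN : HilbertModule C' N} {q : C →⋆ₙₐ[ℂ] C'}

lemma norm_le_of_inner {m : M} {n : N} (h : hN.inner n n = q (hM.inner m m)) : ‖n‖ ≤ ‖m‖ := by
  refine (pow_le_pow_iff_left₀ (norm_nonneg _) (norm_nonneg _) two_ne_zero).1 ?_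
  rw [hN.norm_inner_self, h, hM.norm_inner_self]
  exact NonUnitalStarAlgHom.norm_apply_le q _

/-- A map between generating families that respects inner products extends to a morphism of
Hilbert modules. -/
lemma exists_map_of_inner {ι : Type*} {g : ι → M} {g' : ι → N}
    (hg : (Submodule.span ℂ (Set.range g)).topologicalClosure = ⊤)
    (h : ∀ i j, hN.inner (g' i) (g' j) = q (hM.inner (g i) (g j))) :
    ∃ Q : M →L[ℂ] N, (∀ i, Q (g i) = g' i) ∧
      ∀ m m', hN.inner (Q m) (Q m') = q (hM.inner m m') := by
  set L := Finsupp.linearCombination ℂ g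
  set L' := Finsupp.linearCombination ℂ g'
  have key : ∀ x y, hN.inner (L' x) (L' y) = q (hM.inner (L x) (L y)) := by
    intro x y
    induction x using Finsupp.induction_linear with
    | zero => simp [hN.inner_zero_left, hM.inner_zero_left]
    | add x x' hx hx' =>
      rw [map_add, map_add, hN.inner_add_left, hM.inner_add_left, map_add, hx, hx']
    | single i a =>
      induction y using Finsupp.induction_linear with
      | zero => simp [hN.inner_zero_right, hM.inner_zero_right]
      | add y y' hy hy' =>
        rw [map_add, map_add, hN.inner_add_right, hM.inner_add_right, map_add, hy, hy']
      | single j b =>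
        simp only [L, L', Finsupp.linearCombination_single, hN.inner_smulC_left,
          hN.inner_smulC_right, hM.inner_smulC_left, hM.inner_smulC_right, map_smul, h]
  have hdense : DenseRange L := by
    rw [DenseRange, ← LinearMap.coe_range, Finsupp.range_linearCombination]
    exact Submodule.dense_iff_topologicalClosure_eq_top.2 hg
  have hnorm : ∃ K, ∀ x, ‖L' x‖ ≤ K * ‖L x‖ :=
    ⟨1, fun x => by simpa using norm_le_of_inner (key x x)⟩
  have hL : ∀ x, L'.extendOfNorm L (L x) = L' x := LinearMap.extendOfNorm_eq hdense hnorm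
  have hq : Continuous q := AddMonoidHomClass.continuous_of_bound q 1 fun c => by
    simpa using NonUnitalStarAlgHom.norm_apply_le q c
  refine ⟨L'.extendOfNorm L, fun i => by simpa [L, L'] using hL (Finsupp.single i 1), ?_⟩
  intro m m'
  refine hdense.induction_on m (isClosed_eq ((hN.continuous_inner_left _).comp
    (ContinuousLinearMap.continuous _)) (hq.comp (hM.continuous_inner_left _))) fun x => ?_
  refine hdense.induction_on m' (isClosed_eq ((hN.innerL _).continuous.comp
    (ContinuousLinearMap.continuous _)) (hq.comp (hM.innerL _).continuous)) fun y => ?_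
  simp only [hL, key]

variable {Q : M →L[ℂ] N} (hQ : ∀ m m', hN.inner (Q m) (Q m') = q (hM.inner m m'))

include hQ

lemma mem_of_smulR_mem {S : Set M} (hS : IsClosed S) {m : M}
    (h : ∀ e, q e = 0 → hM.smulR m e ∈ S) (hm : Q m = 0) : m ∈ S := by
  refine hS.closure_subset (Metric.mem_closure_iff.2 fun ε hε => ?_)
  obtain ⟨e, he, hle⟩ := exists_norm_sub_smulR_le hQ m (half_pos hε)
    (by rw [hm, norm_zero]; exact (half_pos hε).le)
  exact ⟨_, h e he, by rw [dist_eq_norm]; exact hle.trans_lt (half_lt_self hε)⟩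

lemma map_smulR_eq_zero (m : M) {e : C} (he : q e = 0) : Q (hM.smulR m e) = 0 := by
  rw [map_smulR_of_inner hQ, he, hN.smulR_zero]

lemma norm_map_eq_infDist_ker (m : M) :
    ‖Q m‖ = Metric.infDist m (LinearMap.ker Q.toLinearMap : Set M) := by
  refine le_antisymm ((Metric.le_infDist ⟨0, zero_mem _⟩).2 fun s hs => ?_)
    (le_of_forall_pos_le_add fun ε hε => ?_)
  · have hs : Q s = 0 := hs
    rw [dist_eq_norm, ← sub_zero (Q m), ← hs, ← map_sub]
    exact norm_le_of_inner (hQ _ _)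
  · obtain ⟨e, he, hle⟩ := exists_norm_sub_smulR_le hQ m (r := ‖Q m‖ + ε) (by positivity)
      (by linarith)
    refine (Metric.infDist_le_dist_of_mem (y := hM.smulR m e) ?_).trans
      (by rwa [dist_eq_norm])
    exact map_smulR_eq_zero hQ m he

lemma surjective_of_dense (h : (LinearMap.range Q.toLinearMap).topologicalClosure = ⊤) :
    Function.Surjective Q := by
  have hlift : ∀ m ∈ (⊤ : Submodule ℂ M), ∃ m' ∈ (⊤ : Submodule ℂ M),
      Q m' = Q m ∧ ‖m'‖ ≤ 2 * ‖Q m‖ := by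
    intro m _
    rcases (norm_nonneg (Q m)).eq_or_lt with h0 | h0
    · exact ⟨0, trivial, by rw [map_zero, eq_comm, ← norm_eq_zero, ← h0], by simp⟩
    · obtain ⟨e, he, hle⟩ := exists_norm_sub_smulR_le hQ m (mul_pos two_pos h0) (by linarith)
      exact ⟨_, trivial, by rw [map_sub, map_smulR_eq_zero hQ m he, sub_zero], hle⟩
  intro y
  obtain ⟨x, -, hx⟩ := exists_eq_of_mem_closure_map Q isClosed_univ hlift
    (y := y) (by rw [Submodule.map_top, h]; trivial)
  exact ⟨x, hx⟩

end HilbertModule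

lemma TensorData.smulR_mk2 {B C F M : Type u} [NonUnitalCStarAlgebra B] [NonUnitalCStarAlgebra C]
    [NormedAddCommGroup F] [NormedSpace ℂ F] [CompleteSpace F]
    [NormedAddCommGroup M] [NormedSpace ℂ M] [CompleteSpace M]
    {hF : HilbertModule B F} {actB : B → C → C} (hactB : IsMultiplierAction actB)
    (TC : TensorData hF (trivHM C) actB M) (f : F) (c e : C) :
    TC.str.smulR (TC.mk2 f c) e = TC.mk2 f (c * e) := by
  rw [← sub_eq_zero]
  apply TC.str.eq_zero_of_inner_self
  simp only [TC.str.inner_sub_left, TC.str.inner_sub_right, TC.str.inner_smulR_left,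
    TC.str.inner_smulR_right, TC.inner_mk2, hactB.mul_right]
  simp only [trivHM, star_mul]
  noncomm_ring

/-- Let `F` be a right Hilbert `B`-module, `C` a
`B`-C*-algebra, and `I ⊴ C` a (closed, two-sided, star-closed) ideal.  Then `I`
is a `B`-C*-algebra, `K(F ⊗_B I)` is an ideal in `K(F ⊗_B C)`, and the quotient
`K(F ⊗_B C)/K(F ⊗_B I)` is isomorphic to `K(F ⊗_B (C/I))`; moreover
`(F ⊗_B C)/(F ⊗_B I) ≅ F ⊗_B (C/I)` as right `C/I`-Hilbert modules via
`f ⊗ c + F ⊗_B I ↦ f ⊗ (c + I)`. -/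
theorem compacts_of_quotient {B C C' F MC MQ : Type u}
    [NonUnitalCStarAlgebra B] [NonUnitalCStarAlgebra C] [NonUnitalCStarAlgebra C']
    [NormedAddCommGroup F] [NormedSpace ℂ F] [CompleteSpace F]
    [NormedAddCommGroup MC] [NormedSpace ℂ MC] [CompleteSpace MC]
    [NormedAddCommGroup MQ] [NormedSpace ℂ MQ] [CompleteSpace MQ]
    (hF : HilbertModule B F)
    (actB : B → C → C) (hactB : IsMultiplierAction actB)
    -- the ideal `I ⊴ C`, presented with its quotient map `q_C : C → C/I`
    (I : Set C) (hIclosed : IsClosed I)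
    (hIadd : ∀ c c', c ∈ I → c' ∈ I → c + c' ∈ I)
    (hIsmul : ∀ (z : ℂ) c, c ∈ I → z • c ∈ I)
    (hIstar : ∀ c, c ∈ I → star c ∈ I)
    (hIabsorb_l : ∀ c d, d ∈ I → c * d ∈ I)
    (hIabsorb_r : ∀ c d, d ∈ I → d * c ∈ I)
    (qC : C →⋆ₙₐ[ℂ] C') (hqC : Function.Surjective qC)
    (hker : ∀ c : C, qC c = 0 ↔ c ∈ I)
    -- the `B`-algebra structure on `C/I`
    (actB' : B → C' → C') (hactB' : IsMultiplierAction actB')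
    (hcompat : ∀ (b : B) (c : C), actB' b (qC c) = qC (actB b c))
    -- `MC = F ⊗_B C` and `MQ = F ⊗_B (C/I)`
    (TC : TensorData hF (trivHM C) actB MC)
    (TQ : TensorData hF (trivHM C') actB' MQ) :
    -- `I` is a `B`-C*-algebra (it is `B`-stable)
    (∀ (b : B) (c : C), c ∈ I → actB b c ∈ I) ∧
    -- with `SI = F ⊗_B I ⊆ F ⊗_B C`:
    (letI SI : Set MC :=
      closure (Submodule.span ℂ {m : MC | ∃ (f : F) (c : C), c ∈ I ∧ m = TC.mk2 f c} : Set MC)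
    -- `K(F ⊗_B I)` is an ideal in `K(F ⊗_B C)`
    (∀ T S : MC → MC, IsCptOn TC.str id T → IsCptVecIn TC.str SI S →
      IsCptVecIn TC.str SI (fun z => T (S z)) ∧ IsCptVecIn TC.str SI (fun z => S (T z))) ∧
    -- the quotient module map `q₂ : F ⊗_B C → F ⊗_B (C/I)`
    ∃ q2 : MC → MQ,
      (∀ m m' : MC, q2 (m + m') = q2 m + q2 m') ∧
      (∀ (z : ℂ) (m : MC), q2 (z • m) = z • q2 m) ∧
      (∀ (f : F) (c : C), q2 (TC.mk2 f c) = TQ.mk2 f (qC c)) ∧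
      (∀ (m : MC) (c : C), q2 (TC.str.smulR m c) = TQ.str.smulR (q2 m) (qC c)) ∧
      -- `q₂` identifies `MQ` with the quotient `(F ⊗_B C)/(F ⊗_B I)` isometrically
      (∀ m : MC, ‖q2 m‖ = Metric.infDist m SI) ∧
      Function.Surjective q2 ∧
      -- the quotient of the compacts is `K(F ⊗_B (C/I))`
      (∀ T : MC → MC, IsCptOn TC.str id T →
        ((∀ m, q2 (T m) = 0) ↔ IsCptVecIn TC.str SI T)) ∧
      (∀ T : MC → MC, IsCptOn TC.str id T →
        ∃ S : MQ → MQ, IsCptOn TQ.str id S ∧ ∀ m, q2 (T m) = S (q2 m)) ∧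
      (∀ S : MQ → MQ, IsCptOn TQ.str id S →
        ∃ T : MC → MC, IsCptOn TC.str id T ∧ ∀ m, q2 (T m) = S (q2 m))) := by
  have hact0 : ∀ b, actB' b 0 = 0 := fun b => by
    simpa using hactB'.corr.add_right b 0 0
  obtain ⟨Q, hQmk, hQ⟩ := HilbertModule.exists_map_of_inner (hM := TC.str) (hN := TQ.str) (q := qC)
    (g := fun p : F × C => TC.mk2 p.1 p.2) (g' := fun p => TQ.mk2 p.1 (qC p.2)) TC.dense
    fun p p' => by
      rw [TC.inner_mk2, TQ.inner_mk2, hcompat]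
      simp [trivHM, map_star]
  replace hQmk : ∀ f c, Q (TC.mk2 f c) = TQ.mk2 f (qC c) := fun f c => hQmk (f, c)
  have hmk0 : ∀ f, TQ.mk2 f 0 = 0 := fun f => by
    simpa using TQ.mk2_add_right f 0 0
  have hsurj : Function.Surjective Q := by
    refine HilbertModule.surjective_of_dense hQ (top_le_iff.1 ?_)
    rw [← TQ.dense]
    refine Submodule.topologicalClosure_mono (Submodule.span_le.2 ?_)
    rintro _ ⟨⟨f, c⟩, rfl⟩
    obtain ⟨c, rfl⟩ := hqC c
    exact ⟨_, hQmk f c⟩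
  have hSI : closure (Submodule.span ℂ {m : MC | ∃ (f : F) (c : C), c ∈ I ∧ m = TC.mk2 f c} :
      Set MC) = LinearMap.ker Q.toLinearMap := by
    set V := Submodule.span ℂ {m : MC | ∃ (f : F) (c : C), c ∈ I ∧ m = TC.mk2 f c} with hV
    refine Set.Subset.antisymm (closure_minimal (Submodule.span_le.2 ?_) Q.isClosed_ker) ?_
    · rintro _ ⟨f, c, hc, rfl⟩
      change Q _ = 0
      rw [hQmk, (hker c).2 hc, hmk0]
    · intro m hm
      refine HilbertModule.mem_of_smulR_mem hQ isClosed_closure (fun e he => ?_) hm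
      have hle : Submodule.span ℂ (Set.range fun p : F × C => TC.mk2 p.1 p.2) ≤
          V.comap (TC.str.mulRight e).toLinearMap := by
        refine Submodule.span_le.2 ?_
        rintro _ ⟨⟨f, c⟩, rfl⟩
        refine Submodule.subset_span ⟨f, c * e, hIabsorb_l c e ((hker e).1 he), ?_⟩
        exact TC.smulR_mk2 hactB f c e
      exact map_mem_closure (f := TC.str.mulRight e) (TC.str.mulRight e).continuous
        (Submodule.dense_iff_topologicalClosure_eq_top.2 TC.dense m) fun x hx => hle hx
  refine ⟨fun b c hc => ?_, ?_⟩
  · rw [← hker, ← hcompat, (hker c).2 hc, hact0]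
  rw [hSI]
  refine ⟨fun T S hT hS => ?_, Q, map_add Q, map_smul Q, hQmk,
    HilbertModule.map_smulR_of_inner hQ, HilbertModule.norm_map_eq_infDist_ker hQ, hsurj,
    fun T hT => ?_, fun T hT => ?_, fun S hS => ?_⟩
  · obtain ⟨a, -, rfl⟩ := (HilbertModule.Adj.isCptOn_iff T).1 hT
    obtain ⟨b, hb, rfl⟩ := (HilbertModule.Adj.isCptVecIn_iff _ S).1 hS
    exact ⟨(HilbertModule.Adj.isCptVecIn_iff _ _).2 ⟨a * b, HilbertModule.Adj.mul_mem_compacts_left a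
        (fun _ => a.map_apply_eq_zero hQ) hb, rfl⟩,
      (HilbertModule.Adj.isCptVecIn_iff _ _).2 ⟨b * a, HilbertModule.Adj.mul_mem_compacts_right a
        (fun _ => (star a).map_apply_eq_zero hQ) hb, rfl⟩⟩
  · obtain ⟨a, ha, rfl⟩ := (HilbertModule.Adj.isCptOn_iff T).1 hT
    rw [HilbertModule.Adj.mem_compacts_ker_iff hQ ha, HilbertModule.Adj.isCptVecIn_iff]
    refine ⟨fun h => ⟨a, h, rfl⟩, ?_⟩
    rintro ⟨b, hb, e⟩
    rwa [HilbertModule.Adj.ext_apply (congrFun e)]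
  · obtain ⟨a, ha, rfl⟩ := (HilbertModule.Adj.isCptOn_iff T).1 hT
    exact ⟨_, (HilbertModule.Adj.isCptOn_iff _).2
      ⟨_, HilbertModule.Adj.descend_mem_compacts hQ hsurj ha, rfl⟩,
      fun m => (HilbertModule.Adj.descend_apply hQ hsurj a m).symm⟩
  · obtain ⟨b, hb, rfl⟩ := (HilbertModule.Adj.isCptOn_iff S).1 hS
    obtain ⟨a, ha, rfl⟩ := HilbertModule.Adj.exists_descend_eq_of_mem_compacts hQ hsurj hb
    exact ⟨_, (HilbertModule.Adj.isCptOn_iff _).2 ⟨a, ha, rfl⟩,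
      fun m => (HilbertModule.Adj.descend_apply hQ hsurj a m).symm⟩
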